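/- arXiv:2503.11161 — 2 statements merged into one kernel-verified Lean document; each statement's English description precedes it below -/
import Mathlib

section
/- Let H be an infinite-dimensional separable real Hilbert space and let L be a Lagrange subspace of H × H. Then there exists a Lagrange subspace L₀ of H × H such that the orthogonal projection Π_L of H × H onto L, restricted to L₀, is injective and has dense range in L, but is not surjective onto L. Concretely, if (e_k)_{k≥1} is an orthonormal basis of L and (a_k), (b_k) are real sequences with a_k² + b_k² = 1, a_k > 0 for all k and a_k → 0 as k → ∞, then the closed linear span L₀ of the orthonormal family (a_k e_k + b_k J e_k)_{k≥1} is such a Lagrange subspace. -/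
/-! Setting: `H` is a real Hilbert space; on `H × H` (with the product inner product,
realized as `WithLp 2 (H × H)`) the complex structure is `J (v, η) := (-η, v)`;
a closed subspace `L` is Lagrange if `J L = Lᗮ`. -/

/-- The complex structure `J (v, η) = (-η, v)` on `H × H`. -/
noncomputable def Jmap (H : Type*) [NormedAddCommGroup H] [InnerProductSpace ℝ H] :
    WithLp 2 (H × H) →ₗ[ℝ] WithLp 2 (H × H) :=
  (WithLp.linearEquiv 2 ℝ (H × H)).symm.toLinearMap ∘ₗ
    ((LinearMap.prod (-(LinearMap.snd ℝ H H)) (LinearMap.fst ℝ H H)) ∘ₗ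
      (WithLp.linearEquiv 2 ℝ (H × H)).toLinearMap)

/-- A subspace `L ⊆ H × H` is Lagrange if `J L = Lᗮ`. -/
def IsLagrange {H : Type*} [NormedAddCommGroup H] [InnerProductSpace ℝ H]
    (L : Submodule ℝ (WithLp 2 (H × H))) : Prop :=
  L.map (Jmap H) = Lᗮ

/-! `L₀` is obtained from `L` by multiplying each `e k` by the unit complex number `a k + b k i`,
with `J` in the role of `i`. Since `L` is Lagrange, the `e k` together with the `J (e k)` are total
in `H × H`. Each pair `e k`, `J (e k)` is recovered from its rotated pair, so the rotated pairs are
total as well, and as the rotated vectors are isotropic they span a Lagrange subspace. The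
projection onto `L` sends the `k`-th rotated unit vector to `a k • e k`: its image is dense as
`a k ≠ 0`, but it is not bounded below as `a k` gets arbitrarily small, so by the open mapping
theorem its image is not closed. -/

open Submodule

section ClosedSpan

variable {R E F ι : Type*} [Semiring R]
  [AddCommMonoid E] [Module R E] [TopologicalSpace E] [ContinuousAdd E] [ContinuousConstSMul R E]
  [AddCommMonoid F] [Module R F] [TopologicalSpace F] [ContinuousAdd F] [ContinuousConstSMul R F]

variable (R) in
/-- The closed linear span of a family of vectors. It is reducible so that the library's lemmas on
`Submodule.topologicalClosure` apply to it directly. -/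
abbrev closedSpan (f : ι → E) : Submodule R E :=
  (span R (Set.range f)).topologicalClosure

theorem mem_closedSpan (f : ι → E) (i : ι) : f i ∈ closedSpan R f :=
  le_topologicalClosure _ (subset_span (Set.mem_range_self i))

theorem closedSpan_smul {a : ι → R} (ha : ∀ i, IsUnit (a i)) (f : ι → E) :
    closedSpan R (fun i => a i • f i) = closedSpan R f := by
  simp only [closedSpan, span_range_eq_iSup, span_singleton_smul_eq (ha _)]

theorem closure_image_closedSpan (T : E →L[R] F) (f : ι → E) :
    closure (T '' (closedSpan R f : Set E)) = closedSpan R (fun i => T (f i)) := by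
  have image_span : T '' (span R (Set.range f) : Set E) = span R (Set.range fun i => T (f i)) := by
    rw [Set.range_comp' T f]
    exact congrArg SetLike.coe (map_span (T : E →ₗ[R] F) (Set.range f))
  rw [topologicalClosure_coe, closure_image_closure T.continuous, image_span,
    topologicalClosure_coe]

end ClosedSpan

theorem mem_orthogonal_closedSpan_iff {𝕜 E ι : Type*} [RCLike 𝕜] [NormedAddCommGroup E]
    [InnerProductSpace 𝕜 E] {f : ι → E} {x : E} :
    x ∈ (closedSpan 𝕜 f)ᗮ ↔ ∀ i, inner 𝕜 (f i) x = 0 := by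
  rw [orthogonal_closure, ← span_singleton_le_iff_mem, ← isOrtho_iff_le, isOrtho_comm, isOrtho_span]
  simp

theorem not_isClosed_image_of_injOn {𝕜 E F : Type*} [NontriviallyNormedField 𝕜]
    [NormedAddCommGroup E] [NormedSpace 𝕜 E] [NormedAddCommGroup F] [NormedSpace 𝕜 F]
    [CompleteSpace F] {T : E →L[𝕜] F} {K : Submodule 𝕜 E} [CompleteSpace K]
    (hinj : Set.InjOn T K) (hsmall : ∀ ε > 0, ∃ x ∈ K, ‖x‖ = 1 ∧ ‖T x‖ < ε) :
    ¬ IsClosed (T '' (K : Set E)) := by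
  intro hclosed
  have image_eq_range : T '' (K : Set E) = Set.range (T ∘L K.subtypeL) := by
    rw [ContinuousLinearMap.coe_comp, Set.range_comp]
    simp
  obtain ⟨C, hC⟩ := (T ∘L K.subtypeL).antilipschitz_of_injective_of_isClosed_range
    hinj.injective (image_eq_range ▸ hclosed)
  obtain ⟨x, hxK, hx, hTx⟩ := hsmall ((C : ℝ) + 1)⁻¹ (by positivity)
  have norm_le : 1 ≤ C * ‖T x‖ :=
    hx ▸ (T ∘L K.subtypeL).bound_of_antilipschitz hC ⟨x, hxK⟩
  have lt_one : (C + 1) * ‖T x‖ < 1 := by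
    rwa [← lt_inv_mul_iff₀ (by positivity), mul_one]
  linarith [norm_nonneg (T x)]

section ComplexStructure

variable {H : Type*} [NormedAddCommGroup H] [InnerProductSpace ℝ H]

theorem Jmap_Jmap (x : WithLp 2 (H × H)) : Jmap H (Jmap H x) = -x := by
  apply (WithLp.linearEquiv 2 ℝ (H × H)).injective
  ext <;> simp [Jmap]

theorem inner_Jmap_Jmap (x y : WithLp 2 (H × H)) :
    inner ℝ (Jmap H x) (Jmap H y) = inner ℝ x y := by
  simp [Jmap, WithLp.prod_inner_apply, add_comm]

theorem inner_Jmap_left (x y : WithLp 2 (H × H)) :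
    inner ℝ (Jmap H x) y = -inner ℝ x (Jmap H y) := by
  rw [← inner_Jmap_Jmap x, Jmap_Jmap, inner_neg_right, neg_neg]

theorem inner_Jmap_self (x : WithLp 2 (H × H)) : inner ℝ x (Jmap H x) = 0 := by
  linarith [inner_Jmap_left x x, real_inner_comm x (Jmap H x)]

/-- Multiplication of `x` by the complex number `a + b i`, where `Jmap H` plays the role of `i`.
For `a ^ 2 + b ^ 2 = 1` it rotates `x` in the plane spanned by `x` and `Jmap H x`. -/
noncomputable def rotate (a b : ℝ) (x : WithLp 2 (H × H)) : WithLp 2 (H × H) :=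
  a • x + b • Jmap H x

theorem Jmap_rotate (a b : ℝ) (x : WithLp 2 (H × H)) :
    Jmap H (rotate a b x) = a • Jmap H x - b • x := by
  rw [rotate, map_add, map_smul, map_smul, Jmap_Jmap, smul_neg, sub_eq_add_neg]

theorem norm_rotate {a b : ℝ} (hab : a ^ 2 + b ^ 2 = 1) (x : WithLp 2 (H × H)) :
    ‖rotate a b x‖ = ‖x‖ := by
  have orthogonal : inner ℝ (a • x) (b • Jmap H x) = 0 := by
    rw [real_inner_smul_left, real_inner_smul_right, inner_Jmap_self, mul_zero, mul_zero]
  have norm_Jmap : ‖Jmap H x‖ = ‖x‖ := by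
    rw [norm_eq_sqrt_real_inner, inner_Jmap_Jmap, ← norm_eq_sqrt_real_inner]
  refine (sq_eq_sq₀ (norm_nonneg _) (norm_nonneg _)).mp ?_
  rw [rotate, norm_add_sq_real, orthogonal, norm_smul, norm_smul, norm_Jmap, mul_pow, mul_pow,
    Real.norm_eq_abs, Real.norm_eq_abs, sq_abs, sq_abs]
  linear_combination ‖x‖ ^ 2 * hab

theorem inner_rotate_Jmap_rotate (a b c d : ℝ) (x y : WithLp 2 (H × H)) :
    inner ℝ (rotate a b x) (Jmap H (rotate c d y)) =
      (a * c + b * d) * inner ℝ x (Jmap H y) + (b * c - a * d) * inner ℝ x y := by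
  rw [Jmap_rotate, rotate, inner_add_left, inner_sub_right, inner_sub_right]
  simp only [real_inner_smul_left, real_inner_smul_right, inner_Jmap_Jmap]
  rw [inner_Jmap_left]
  ring

theorem smul_rotate_sub_smul_Jmap_rotate {a b : ℝ} (hab : a ^ 2 + b ^ 2 = 1)
    (x : WithLp 2 (H × H)) : a • rotate a b x - b • Jmap H (rotate a b x) = x := by
  calc a • rotate a b x - b • Jmap H (rotate a b x)
      = (a ^ 2 + b ^ 2) • x := by
        rw [Jmap_rotate, rotate]
        module
    _ = x := by rw [hab, one_smul]

end ComplexStructure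

section Lagrange

variable {H ι : Type*} [NormedAddCommGroup H] [InnerProductSpace ℝ H]
  {L : Submodule ℝ (WithLp 2 (H × H))} {e f : ι → WithLp 2 (H × H)} {a b : ι → ℝ}

theorem IsLagrange.Jmap_mem_orthogonal (hL : IsLagrange L) {x : WithLp 2 (H × H)} (hx : x ∈ L) :
    Jmap H x ∈ Lᗮ :=
  hL ▸ mem_map_of_mem hx

theorem IsLagrange.inner_Jmap_eq_zero (hL : IsLagrange L) {x y : WithLp 2 (H × H)} (hx : x ∈ L)
    (hy : y ∈ L) : inner ℝ x (Jmap H y) = 0 :=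
  inner_right_of_mem_orthogonal hx (hL.Jmap_mem_orthogonal hy)

theorem Jmap_mem_orthogonal_closedSpan (hf : ∀ i j, inner ℝ (f i) (Jmap H (f j)) = 0)
    {x : WithLp 2 (H × H)} (hx : x ∈ closedSpan ℝ f) : Jmap H x ∈ (closedSpan ℝ f)ᗮ := by
  refine mem_orthogonal_closedSpan_iff.mpr fun i => ?_
  have Jmap_mem : Jmap H (f i) ∈ (closedSpan ℝ f)ᗮ :=
    mem_orthogonal_closedSpan_iff.mpr fun j => hf j i
  rw [← neg_eq_zero, ← inner_Jmap_left]
  exact inner_left_of_mem_orthogonal hx Jmap_mem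

theorem IsLagrange.eq_zero_of_inner_closedSpan (hL : IsLagrange (closedSpan ℝ f))
    {x : WithLp 2 (H × H)} (hx : ∀ i, inner ℝ (f i) x = 0)
    (hJx : ∀ i, inner ℝ (Jmap H (f i)) x = 0) : x = 0 := by
  have x_mem : x ∈ (closedSpan ℝ f).map (Jmap H) := hL ▸ mem_orthogonal_closedSpan_iff.mpr hx
  obtain ⟨l, hl, rfl⟩ := x_mem
  have l_mem_orthogonal : l ∈ (closedSpan ℝ f)ᗮ :=
    mem_orthogonal_closedSpan_iff.mpr fun i => by rw [← inner_Jmap_Jmap, hJx]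
  rw [disjoint_def.mp (orthogonal_disjoint _) l hl l_mem_orthogonal, map_zero]

theorem isLagrange_closedSpan_of_total [CompleteSpace H]
    (hf : ∀ i j, inner ℝ (f i) (Jmap H (f j)) = 0)
    (htotal : ∀ x, (∀ i, inner ℝ (f i) x = 0) → (∀ i, inner ℝ (Jmap H (f i)) x = 0) → x = 0) :
    IsLagrange (closedSpan ℝ f) := by
  refine le_antisymm ?_ fun y hy => ?_
  · rintro _ ⟨x, hx, rfl⟩
    exact Jmap_mem_orthogonal_closedSpan hf hx
  · obtain ⟨p, hp, q, hq, hpq⟩ := (closedSpan ℝ f).exists_add_mem_mem_orthogonal (Jmap H y)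
    have q_eq_zero : q = 0 := by
      refine htotal q (mem_orthogonal_closedSpan_iff.mp hq) fun i => ?_
      calc inner ℝ (Jmap H (f i)) q
          = inner ℝ (Jmap H (f i)) (Jmap H y) - inner ℝ (Jmap H (f i)) p := by
            rw [hpq, inner_add_right, add_sub_cancel_left]
        _ = 0 := by
            rw [inner_Jmap_Jmap, mem_orthogonal_closedSpan_iff.mp hy, zero_sub, neg_eq_zero]
            exact inner_left_of_mem_orthogonal hp
              (Jmap_mem_orthogonal_closedSpan hf (mem_closedSpan f i))
    refine ⟨-p, neg_mem hp, ?_⟩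
    rw [map_neg, neg_eq_iff_eq_neg, ← Jmap_Jmap, hpq, q_eq_zero, add_zero]

theorem IsLagrange.closedSpan_rotate [CompleteSpace H] (hL : IsLagrange (closedSpan ℝ e))
    (he : Pairwise fun i j => inner ℝ (e i) (e j) = 0) (hab : ∀ i, a i ^ 2 + b i ^ 2 = 1) :
    IsLagrange (closedSpan ℝ fun i => rotate (a i) (b i) (e i)) := by
  refine isLagrange_closedSpan_of_total (fun i j => ?_) fun x hx hJx => ?_
  · rw [inner_rotate_Jmap_rotate, hL.inner_Jmap_eq_zero (mem_closedSpan e i) (mem_closedSpan e j)]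
    obtain rfl | hij := eq_or_ne i j
    · ring
    · rw [he hij]
      ring
  · refine hL.eq_zero_of_inner_closedSpan (fun i => ?_) fun i => ?_ <;>
      rw [← smul_rotate_sub_smul_Jmap_rotate (hab i) (e i)]
    · rw [inner_sub_left, real_inner_smul_left, real_inner_smul_left, hx, hJx]
      ring
    · rw [map_sub, map_smul, map_smul, Jmap_Jmap, inner_sub_left, real_inner_smul_left,
        real_inner_smul_left, inner_neg_left, hx, hJx]
      ring

theorem IsLagrange.starProjection_rotate [L.HasOrthogonalProjection] (hL : IsLagrange L)
    (a b : ℝ) {x : WithLp 2 (H × H)} (hx : x ∈ L) :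
    L.starProjection (rotate a b x) = a • x :=
  eq_starProjection_of_mem_orthogonal (smul_mem _ a hx) <| by
    rw [rotate, add_sub_cancel_left]
    exact smul_mem _ b (hL.Jmap_mem_orthogonal hx)

theorem IsLagrange.disjoint_closedSpan_rotate_orthogonal (hL : IsLagrange (closedSpan ℝ e))
    (hL₀ : IsLagrange (closedSpan ℝ fun i => rotate (a i) (b i) (e i))) (ha : ∀ i, a i ≠ 0) :
    Disjoint (closedSpan ℝ fun i => rotate (a i) (b i) (e i)) (closedSpan ℝ e)ᗮ := by
  refine disjoint_def.mpr fun x hx hx_orthogonal => ?_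
  have inner_e : ∀ i, inner ℝ (e i) x = 0 := mem_orthogonal_closedSpan_iff.mp hx_orthogonal
  refine hL.eq_zero_of_inner_closedSpan inner_e fun i => ?_
  have inner_Jmap_rotate : inner ℝ (Jmap H (rotate (a i) (b i) (e i))) x = 0 :=
    inner_left_of_mem_orthogonal hx (hL₀.Jmap_mem_orthogonal (mem_closedSpan _ i))
  rw [Jmap_rotate, inner_sub_left, real_inner_smul_left, real_inner_smul_left, inner_e, mul_zero,
    sub_zero] at inner_Jmap_rotate
  exact (mul_eq_zero.mp inner_Jmap_rotate).resolve_left (ha i)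

section Projection

variable [(closedSpan ℝ e).HasOrthogonalProjection]

theorem IsLagrange.injOn_starProjection_closedSpan_rotate (hL : IsLagrange (closedSpan ℝ e))
    (hL₀ : IsLagrange (closedSpan ℝ fun i => rotate (a i) (b i) (e i))) (ha : ∀ i, a i ≠ 0) :
    Set.InjOn (closedSpan ℝ e).starProjection
      (closedSpan ℝ fun i => rotate (a i) (b i) (e i)) := by
  refine LinearMap.injOn_of_disjoint_ker subset_rfl ?_
  rw [ker_starProjection]
  exact hL.disjoint_closedSpan_rotate_orthogonal hL₀ ha

theorem IsLagrange.closure_starProjection_image_closedSpan_rotate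
    (hL : IsLagrange (closedSpan ℝ e)) (ha : ∀ i, a i ≠ 0) :
    closure ((closedSpan ℝ e).starProjection ''
      (closedSpan ℝ (fun i => rotate (a i) (b i) (e i)) : Set (WithLp 2 (H × H)))) =
        closedSpan ℝ e := by
  simp only [closure_image_closedSpan, hL.starProjection_rotate _ _ (mem_closedSpan e _),
    closedSpan_smul fun i => (ha i).isUnit]

end Projection

theorem IsLagrange.not_surjOn_starProjection_closedSpan_rotate [CompleteSpace H]
    (hL : IsLagrange (closedSpan ℝ e)) (he : ∀ i, ‖e i‖ = 1)
    (hab : ∀ i, a i ^ 2 + b i ^ 2 = 1) (ha_small : ∀ ε > 0, ∃ i, |a i| < ε)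
    (hinj : Set.InjOn (closedSpan ℝ e).starProjection
      (closedSpan ℝ fun i => rotate (a i) (b i) (e i))) :
    ¬ Set.SurjOn (closedSpan ℝ e).starProjection
      (closedSpan ℝ fun i => rotate (a i) (b i) (e i)) (closedSpan ℝ e) := by
  intro hsurj
  refine not_isClosed_image_of_injOn hinj (fun ε hε => ?_) ?_
  · obtain ⟨i, hi⟩ := ha_small ε hε
    refine ⟨_, mem_closedSpan _ i, by rw [norm_rotate (hab i), he], ?_⟩
    rwa [hL.starProjection_rotate _ _ (mem_closedSpan e i), norm_smul, he, mul_one]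
  · rw [hsurj.image_eq_of_mapsTo fun x _ => starProjection_apply_mem _ x]
    exact isClosed_topologicalClosure _

end Lagrange

theorem stmt6_general {H ι : Type*} [NormedAddCommGroup H] [InnerProductSpace ℝ H] [CompleteSpace H]
    {L : Submodule ℝ (WithLp 2 (H × H))} (hL : IsLagrange L)
    {PL : WithLp 2 (H × H) →L[ℝ] WithLp 2 (H × H)}
    (hPL_mem : ∀ x, PL x ∈ L) (hPL_orth : ∀ x, x - PL x ∈ Lᗮ)
    {e : ι → WithLp 2 (H × H)} (he_on : Orthonormal ℝ e) (he_total : closedSpan ℝ e = L)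
    {a b : ι → ℝ} (hab : ∀ i, a i ^ 2 + b i ^ 2 = 1) (ha : ∀ i, a i ≠ 0)
    (ha_small : ∀ ε > 0, ∃ i, |a i| < ε) {L₀ : Submodule ℝ (WithLp 2 (H × H))}
    (hL₀ : L₀ = closedSpan ℝ fun i => rotate (a i) (b i) (e i)) :
    IsLagrange L₀ ∧ Set.InjOn PL L₀ ∧ closure (PL '' (L₀ : Set (WithLp 2 (H × H)))) = L ∧
      ¬ Set.SurjOn PL L₀ L := by
  subst he_total hL₀
  obtain rfl : PL = (closedSpan ℝ e).starProjection :=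
    ContinuousLinearMap.ext fun x =>
      (eq_starProjection_of_mem_orthogonal (hPL_mem x) (hPL_orth x)).symm
  have lagrange := hL.closedSpan_rotate he_on.2 hab
  have injOn := hL.injOn_starProjection_closedSpan_rotate lagrange ha
  exact ⟨lagrange, injOn, hL.closure_starProjection_image_closedSpan_rotate ha,
    hL.not_surjOn_starProjection_closedSpan_rotate he_on.1 hab ha_small injOn⟩

/-- Let `H` be an infinite-dimensional separable real Hilbert space
and `L` a Lagrange subspace of `H × H`, with orthogonal projection `PL` onto `L`.
Then there exists a Lagrange subspace `L₀` on which `PL` is injective with dense,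
but not full, image in `L`.  Concretely, if `(e k)` is an orthonormal basis of `L`
and `a`, `b` are real sequences with `a k ^ 2 + b k ^ 2 = 1`, `a k > 0` and
`a k → 0`, then `L₀ := closure (span (a k • e k + b k • J (e k)))` is such a
Lagrange subspace. -/
theorem stmt6 {H : Type*} [NormedAddCommGroup H] [InnerProductSpace ℝ H] [CompleteSpace H]
    [TopologicalSpace.SeparableSpace H] (hinf : ¬ FiniteDimensional ℝ H)
    (L : Submodule ℝ (WithLp 2 (H × H)))
    (hLC : IsClosed (L : Set (WithLp 2 (H × H)))) (hL : IsLagrange L)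
    (PL : WithLp 2 (H × H) →L[ℝ] WithLp 2 (H × H))
    (hPL_mem : ∀ x, PL x ∈ L) (hPL_orth : ∀ x, x - PL x ∈ Lᗮ)
    (e : ℕ → WithLp 2 (H × H)) (he_on : Orthonormal ℝ e) (he_mem : ∀ k, e k ∈ L)
    (he_total : (Submodule.span ℝ (Set.range e)).topologicalClosure = L)
    (a b : ℕ → ℝ) (hab : ∀ k, a k ^ 2 + b k ^ 2 = 1) (ha_pos : ∀ k, 0 < a k)
    (ha_lim : Filter.Tendsto a Filter.atTop (nhds 0)) :
    (∃ L₀ : Submodule ℝ (WithLp 2 (H × H)),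
      IsClosed (L₀ : Set (WithLp 2 (H × H))) ∧ IsLagrange L₀ ∧
      Set.InjOn PL (L₀ : Set (WithLp 2 (H × H))) ∧
      closure (PL '' (L₀ : Set (WithLp 2 (H × H)))) = (L : Set (WithLp 2 (H × H))) ∧
      ¬ Set.SurjOn PL (L₀ : Set (WithLp 2 (H × H))) (L : Set (WithLp 2 (H × H)))) ∧
    (∀ L₀ : Submodule ℝ (WithLp 2 (H × H)),
      L₀ = (Submodule.span ℝ
          (Set.range (fun k => a k • e k + b k • Jmap H (e k)))).topologicalClosure →
      IsLagrange L₀ ∧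
      Set.InjOn PL (L₀ : Set (WithLp 2 (H × H))) ∧
      closure (PL '' (L₀ : Set (WithLp 2 (H × H)))) = (L : Set (WithLp 2 (H × H))) ∧
      ¬ Set.SurjOn PL (L₀ : Set (WithLp 2 (H × H))) (L : Set (WithLp 2 (H × H)))) := by
  have h := fun L₀ => stmt6_general (L₀ := L₀) hL hPL_mem hPL_orth he_on he_total hab
    (fun k => (ha_pos k).ne') fun ε hε => (ha_lim.abs.eventually_lt_const (by simpa)).exists
  exact ⟨⟨_, isClosed_topologicalClosure _, h _ rfl⟩, h⟩
end

section
/- Let H be a real Hilbert space and set L_η := {0} × H ⊆ H × H. Let L be a Lagrange subspace of H × H such that L ∩ L_η = {0} and such that there exists a finite-dimensional subspace L_c of H × H with L ⊕ L_c ⊕ L_η = H × H. Then there exists a bounded self-adjoint operator P ∈ L(H) such that L = { (v, −P v) : v ∈ H }. -/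
open scoped RealInnerProductSpace

/-- The "vertical" subspace `L_η = {0} × H` of `H × H`. -/
noncomputable def Leta (H : Type*) [NormedAddCommGroup H] [InnerProductSpace ℝ H] :
    Submodule ℝ (WithLp 2 (H × H)) :=
  Submodule.comap (WithLp.linearEquiv 2 ℝ (H × H)).toLinearMap
    ((⊥ : Submodule ℝ H).prod (⊤ : Submodule ℝ H))

/-!
Both `L` and `L_η` are Lagrange, so `(L + L_η)ᗮ = J L ∩ J L_η = J (L ∩ L_η) = 0`. The sum `L + L_η`
has finite codimension and is the range of the addition map `L × L_η → H × H` between Banach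
spaces, so by the open mapping theorem it is closed, and therefore the whole space. Being a
complement of `L_η`, `L` is the graph of an everywhere defined operator, which is symmetric since
`L` is isotropic, and therefore bounded by the Hellinger–Toeplitz theorem.
-/

section ClosedRange

variable {𝕜 E F : Type*} [NontriviallyNormedField 𝕜]
  [NormedAddCommGroup E] [NormedSpace 𝕜 E] [CompleteSpace E]
  [NormedAddCommGroup F] [NormedSpace 𝕜 F] [CompleteSpace F]

theorem isClosed_range_of_isCompl (f : E →L[𝕜] F) {G : Submodule 𝕜 F}
    (hfG : IsCompl f.range G) (hG : IsClosed (G : Set F)) : IsClosed (f.range : Set F) := by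
  have : CompleteSpace G := hG.completeSpace_coe
  let g : E × G →L[𝕜] F := f.coprod G.subtypeL
  have hg : Function.Surjective g := by
    rw [← ContinuousLinearMap.coe_coe, ← LinearMap.range_eq_top]
    simp [g, LinearMap.range_coprod, hfG.sup_eq_top]
  have preimage_range : g ⁻¹' f.range = Prod.snd ⁻¹' {0} := by
    ext ⟨x, y⟩
    have mem_iff : f x + y ∈ f.range ↔ (y : F) ∈ f.range :=
      f.range.add_mem_iff_right (LinearMap.mem_range_self f.toLinearMap x)
    have zero_iff : (y : F) ∈ f.range ↔ y = 0 :=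
      ⟨fun hy ↦ Subtype.ext (Submodule.disjoint_def.1 hfG.disjoint y hy y.2),
        fun hy ↦ by simp [hy]⟩
    exact mem_iff.trans zero_iff
  rw [← (g.isQuotientMap hg).isClosed_preimage, preimage_range]
  exact isClosed_singleton.preimage continuous_snd

theorem isClosed_sup_of_sup_finiteDimensional_eq_top [CompleteSpace 𝕜] {K M N : Submodule 𝕜 E}
    [FiniteDimensional 𝕜 K] (hM : IsClosed (M : Set E)) (hN : IsClosed (N : Set E))
    (hsup : M ⊔ K ⊔ N = ⊤) : IsClosed ((M ⊔ N : Submodule 𝕜 E) : Set E) := by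
  have : CompleteSpace M := hM.completeSpace_coe
  have : CompleteSpace N := hN.completeSpace_coe
  have hcod : Codisjoint (M ⊔ N) K := codisjoint_iff.2 <| by rw [sup_right_comm, hsup]
  obtain ⟨G, hGK, hG⟩ := hcod.symm.exists_isCompl
  have : FiniteDimensional 𝕜 G := Submodule.finiteDimensional_of_le hGK
  have range_add : (M.subtypeL.coprod N.subtypeL).range = M ⊔ N := by
    simp [LinearMap.range_coprod]
  rw [← range_add] at hG ⊢
  exact isClosed_range_of_isCompl _ hG.symm G.closed_of_finiteDimensional

end ClosedRange

section Lagrange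

variable {H : Type*} [NormedAddCommGroup H] [InnerProductSpace ℝ H]
  {L M : Submodule ℝ (WithLp 2 (H × H))}

theorem Jmap_apply (z : WithLp 2 (H × H)) : Jmap H z = WithLp.toLp 2 (-z.snd, z.fst) := rfl

theorem Jmap_injective : Function.Injective (Jmap H) := by
  intro z w h
  have hsnd : -z.snd = -w.snd := congrArg WithLp.fst h
  have hfst : z.fst = w.fst := congrArg WithLp.snd h
  exact WithLp.ofLp_injective 2 (Prod.ext hfst (neg_injective hsnd))

theorem mem_Leta {z : WithLp 2 (H × H)} : z ∈ Leta H ↔ z.fst = 0 := by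
  simp [Leta, Submodule.mem_prod]

theorem isClosed_Leta : IsClosed (Leta H : Set (WithLp 2 (H × H))) := by
  have : (Leta H : Set (WithLp 2 (H × H))) = WithLp.fstL 2 ℝ H H ⁻¹' {0} := by
    ext z
    exact mem_Leta
  rw [this]
  exact isClosed_singleton.preimage (WithLp.fstL 2 ℝ H H).continuous

theorem isLagrange_Leta : IsLagrange (Leta H) := by
  ext w
  constructor
  · rintro ⟨z, hz, rfl⟩
    rw [Submodule.mem_orthogonal]
    intro u hu
    simp [Jmap_apply, WithLp.prod_inner_apply, mem_Leta.1 hu, mem_Leta.1 hz]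
  · intro hw
    have hsnd : w.snd = 0 := by
      have := (Submodule.mem_orthogonal _ _).1 hw (WithLp.toLp 2 (0, w.snd)) (mem_Leta.2 rfl)
      simpa [WithLp.prod_inner_apply] using this
    refine ⟨WithLp.toLp 2 (0, -w.fst), mem_Leta.2 rfl, WithLp.ofLp_injective 2 ?_⟩
    exact Prod.ext (neg_neg w.fst) hsnd.symm

namespace IsLagrange

theorem orthogonal_sup (hL : IsLagrange L) (hM : IsLagrange M) :
    (L ⊔ M)ᗮ = (L ⊓ M).map (Jmap H) := by
  rw [← Submodule.inf_orthogonal, ← hL, ← hM, Submodule.map_inf _ Jmap_injective]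

theorem isCompl_of_isClosed_sup [CompleteSpace H] (hL : IsLagrange L) (hM : IsLagrange M)
    (hLM : Disjoint L M) (hclosed : IsClosed ((L ⊔ M : Submodule ℝ _) : Set (WithLp 2 (H × H)))) :
    IsCompl L M := by
  have : CompleteSpace (L ⊔ M : Submodule ℝ _) := hclosed.completeSpace_coe
  have orthogonal_eq_bot : (L ⊔ M)ᗮ = ⊥ := by
    rw [hL.orthogonal_sup hM, hLM.eq_bot, Submodule.map_bot]
  exact ⟨hLM, codisjoint_iff.2 <| Submodule.orthogonal_eq_bot_iff.1 orthogonal_eq_bot⟩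

end IsLagrange

theorem exists_linearMap_of_isCompl_Leta (hL : IsCompl L (Leta H)) :
    ∃ T : H →ₗ[ℝ] H, ∀ z, z ∈ L ↔ z.snd = T z.fst := by
  let G : Submodule ℝ (H × H) := L.comap (WithLp.linearEquiv 2 ℝ (H × H)).symm.toLinearMap
  have injective : Function.Injective (Prod.fst ∘ G.subtype) := by
    intro x y hxy
    have hmem : WithLp.toLp 2 (x - y : H × H) ∈ Leta H := mem_Leta.2 (sub_eq_zero.2 hxy)
    have hzero := Submodule.disjoint_def.1 hL.disjoint _ (G.sub_mem x.2 y.2) hmem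
    exact Subtype.ext (sub_eq_zero.1 (WithLp.toLp_injective 2 hzero))
  have surjective : Function.Surjective (Prod.fst ∘ G.subtype) := by
    intro v
    obtain ⟨x, hx, y, hy, hxy⟩ :=
      Submodule.mem_sup.1 (hL.sup_eq_top ▸ Submodule.mem_top : WithLp.toLp 2 (v, 0) ∈ L ⊔ Leta H)
    have hv : x.fst + y.fst = v := congrArg WithLp.fst hxy
    exact ⟨⟨WithLp.ofLp x, hx⟩, by rwa [mem_Leta.1 hy, add_zero] at hv⟩
  obtain ⟨T, hT⟩ := Submodule.exists_eq_graph ⟨injective, surjective⟩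
  exact ⟨T, fun z ↦ (SetLike.ext_iff.1 hT (WithLp.ofLp z)).trans (T.mem_graph_iff _)⟩

/-- A subspace `L ⊆ H × H` is isotropic if `J L ⊆ Lᗮ`, i.e. if the symplectic form `⟪J z, w⟫`
vanishes on `L`. -/
def IsIsotropic (L : Submodule ℝ (WithLp 2 (H × H))) : Prop :=
  L.map (Jmap H) ≤ Lᗮ

theorem IsLagrange.isIsotropic (hL : IsLagrange L) : IsIsotropic L := hL.le

theorem IsIsotropic.inner_snd_fst (hL : IsIsotropic L) {z w : WithLp 2 (H × H)} (hz : z ∈ L)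
    (hw : w ∈ L) : ⟪z.snd, w.fst⟫ = ⟪z.fst, w.snd⟫ := by
  have hJz : Jmap H z ∈ Lᗮ := hL (Submodule.mem_map_of_mem hz)
  have h : ⟪-z.snd, w.fst⟫ + ⟪z.fst, w.snd⟫ = 0 := (Submodule.mem_orthogonal' _ _).1 hJz w hw
  rw [inner_neg_left] at h
  linarith

theorem IsIsotropic.isSymmetric (hL : IsIsotropic L) {T : H →ₗ[ℝ] H}
    (hT : ∀ v, WithLp.toLp 2 (v, T v) ∈ L) : T.IsSymmetric :=
  fun u v ↦ hL.inner_snd_fst (hT u) (hT v)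

end Lagrange

theorem stmt11_general {H : Type*} [NormedAddCommGroup H] [InnerProductSpace ℝ H]
    [CompleteSpace H] (L : Submodule ℝ (WithLp 2 (H × H))) (hL : IsLagrange L)
    (hdisj : L ⊓ Leta H = ⊥)
    (hclosed : IsClosed ((L ⊔ Leta H : Submodule ℝ _) : Set (WithLp 2 (H × H)))) :
    ∃ P : H →L[ℝ] H, (∀ u v : H, ⟪P u, v⟫ = ⟪u, P v⟫) ∧
      (∀ z : WithLp 2 (H × H), z ∈ L ↔
        (WithLp.equiv 2 (H × H) z).2 = -(P ((WithLp.equiv 2 (H × H) z).1))) := by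
  have hcompl : IsCompl L (Leta H) :=
    hL.isCompl_of_isClosed_sup isLagrange_Leta (disjoint_iff.2 hdisj) hclosed
  obtain ⟨T, hT⟩ := exists_linearMap_of_isCompl_Leta hcompl
  have hsymm : T.IsSymmetric := hL.isIsotropic.isSymmetric fun v ↦ (hT _).2 rfl
  refine ⟨-⟨T, hsymm.continuous⟩, fun u v ↦ ?_, fun z ↦ ?_⟩
  · simpa using hsymm u v
  · simpa using hT z

/-- Let `L` be a Lagrange subspace of `H × H` with `L ∩ L_η = {0}`
such that there is a finite-dimensional subspace `L_c` with `L ⊕ L_c ⊕ L_η = H × H`.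
Then there is a bounded self-adjoint operator `P` on `H` with
`L = { (v, -P v) : v ∈ H }`. -/
theorem stmt11 {H : Type*} [NormedAddCommGroup H] [InnerProductSpace ℝ H] [CompleteSpace H]
    (L : Submodule ℝ (WithLp 2 (H × H)))
    (hLC : IsClosed (L : Set (WithLp 2 (H × H)))) (hL : IsLagrange L)
    (hdisj : L ⊓ Leta H = ⊥)
    (hLc : ∃ Lc : Submodule ℝ (WithLp 2 (H × H)), FiniteDimensional ℝ Lc ∧
      L ⊓ Lc = ⊥ ∧ Lc ⊓ Leta H = ⊥ ∧ L ⊔ Lc ⊔ Leta H = ⊤) :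
    ∃ P : H →L[ℝ] H, (∀ u v : H, ⟪P u, v⟫ = ⟪u, P v⟫) ∧
      (∀ z : WithLp 2 (H × H), z ∈ L ↔
        (WithLp.equiv 2 (H × H) z).2 = -(P ((WithLp.equiv 2 (H × H) z).1))) := by
  obtain ⟨Lc, _, -, -, hsup⟩ := hLc
  exact stmt11_general L hL hdisj
    (isClosed_sup_of_sup_finiteDimensional_eq_top hLC isClosed_Leta hsup)
end
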